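/- arXiv:1409.4799 — 10 statements merged into one kernel-verified Lean document; each statement's English description precedes it below -/
import Mathlib

section
/- Let R > 0 and x ∈ [0,1]. In the Euclidean plane ℝ², put B = (0,0), C = (R,0), and C′ = (xR, R). Let f be the perpendicular bisector of B and C′ (the crease folding B onto C′) and let g be the perpendicular bisector of C and C′ (the crease folding C onto C′). Then f and g intersect in exactly one point S, namely S = (R/2, (R/2)·(1 − x + x²)); in particular the intersection point S lies on the vertical median {(p₁,p₂) : p₁ = R/2} of the square with vertices B=(0,0), C=(R,0), D=(R,R), A=(0,R), for every x ∈ [0,1]. -/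
noncomputable section
open Real EuclideanGeometry

/-- Points of the Euclidean plane `ℝ²`. -/
abbrev Pt : Type := EuclideanSpace ℝ (Fin 2)

/-- The point of `ℝ²` with coordinates `(x, y)`. -/
def pt (x y : ℝ) : Pt := !₂[x, y]

/-- The perpendicular bisector of two points `U`, `V` of the plane: the crease
obtained by folding `U` onto `V`. -/
def perpBisector (U V : Pt) : Set Pt := {P | dist P U = dist P V}

/-- **Haga's second theorem, part 1.**  For the square with vertices
`B=(0,0)`, `C=(R,0)`, `D=(R,R)`, `A=(0,R)` and the point `C' = (xR, R)` on side `AD`,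
the crease folding `B` onto `C'` and the crease folding `C` onto `C'` intersect in
exactly one point `S = (R/2, (R/2)(1 - x + x²))`; in particular `S` lies on the
vertical median `{p | p 0 = R/2}` of the square. -/
theorem haga_second_theorem_part1 (R x : ℝ) (hR : 0 < R) (hx : x ∈ Set.Icc (0:ℝ) 1)
    (B : Pt) (hB : B = pt 0 0) (C : Pt) (hC : C = pt R 0) (C' : Pt) (hC' : C' = pt (x*R) R)
    (S : Pt) (hS : S = pt (R/2) ((R/2) * (1 - x + x^2))) :
    perpBisector B C' ∩ perpBisector C C' = {S} ∧ S ∈ {p : Pt | p 0 = R/2} := by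
  subst hB hC hC' hS
  have key : ∀ (P : Pt) (a b c d : ℝ), P ∈ perpBisector (pt a b) (pt c d) ↔
      (P 0 - a)^2 + (P 1 - b)^2 = (P 0 - c)^2 + (P 1 - d)^2 := by
    intro P a b c d
    simp only [perpBisector, Set.mem_setOf_eq, EuclideanSpace.dist_eq, Fin.sum_univ_two,
      Real.dist_eq, sq_abs, pt]
    rw [Real.sqrt_inj (by positivity) (by positivity)]
    simp
  refine ⟨?_, by simp [pt]⟩
  ext P
  rw [Set.mem_inter_iff, key, key, Set.mem_singleton_iff]
  constructor
  · rintro ⟨h1, h2⟩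
    have e0 : P 0 = R/2 := by
      apply mul_left_cancel₀ hR.ne'
      linarith
    have e1 : P 1 = (R/2) * (1 - x + x^2) := by
      apply mul_left_cancel₀ hR.ne'
      rw [e0] at h1
      linarith
    ext i
    fin_cases i
    · simpa [pt] using e0
    · simpa [pt] using e1
  · rintro rfl
    simp only [pt]
    constructor <;> simp <;> ring
end
end

section
/- Let R > 0 and x ∈ [0,1]. In ℝ², put B = (0,0), C = (R,0), C′ = (xR, R), and let S = (R/2, (R/2)(1 − x + x²)) be the intersection point of the perpendicular bisector of {B, C′} and the perpendicular bisector of {C, C′}. Then dist(S, B) = dist(S, C) = dist(S, C′) = (R/2)·√((1 + (1−x)²)(1 + x²)) = (R/2)·√(2 − x(1−x)(2 − x(1−x))). -/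
noncomputable section
open Real EuclideanGeometry

/-- **Haga's second theorem, part 2.**  With `B=(0,0)`, `C=(R,0)`, `C'=(xR,R)` and
`S = (R/2, (R/2)(1-x+x²))` the intersection point of the two creases,
the three distances from `S` to `B`, `C` and `C'` coincide and equal
`(R/2)·√((1+(1-x)²)(1+x²)) = (R/2)·√(2 - x(1-x)(2 - x(1-x)))`. -/
theorem haga_second_theorem_part2 (R x : ℝ) (hR : 0 < R) (hx : x ∈ Set.Icc (0:ℝ) 1)
    (B : Pt) (hB : B = pt 0 0) (C : Pt) (hC : C = pt R 0) (C' : Pt) (hC' : C' = pt (x*R) R)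
    (S : Pt) (hS : S = pt (R/2) ((R/2) * (1 - x + x^2)))
    (hSmem : perpBisector B C' ∩ perpBisector C C' = {S}) :
    dist S B = dist S C ∧ dist S C = dist S C' ∧
    dist S C' = (R/2) * Real.sqrt ((1 + (1 - x)^2) * (1 + x^2)) ∧
    (R/2) * Real.sqrt ((1 + (1 - x)^2) * (1 + x^2))
      = (R/2) * Real.sqrt (2 - x*(1 - x)*(2 - x*(1 - x))) := by
  subst hB hC hC' hS
  have hR2 : (0:ℝ) ≤ R / 2 := by positivity
  have key : ∀ t : ℝ, t = (R/2)^2 * ((1 + (1 - x)^2) * (1 + x^2)) →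
      Real.sqrt t = (R/2) * Real.sqrt ((1 + (1 - x)^2) * (1 + x^2)) := by
    intro t ht
    rw [ht, Real.sqrt_mul (sq_nonneg _), Real.sqrt_sq hR2]
  have hd : ∀ a b c d : ℝ, dist (pt a b) (pt c d) = Real.sqrt ((a - c)^2 + (b - d)^2) := by
    intro a b c d
    simp [pt, EuclideanSpace.dist_eq, Fin.sum_univ_two, Real.dist_eq, sq_abs]
  have h1 := key ((R/2 - 0)^2 + ((R/2) * (1 - x + x^2) - 0)^2) (by ring)
  have h2 := key ((R/2 - R)^2 + ((R/2) * (1 - x + x^2) - 0)^2) (by ring)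
  have h3 := key ((R/2 - x*R)^2 + ((R/2) * (1 - x + x^2) - R)^2) (by ring)
  rw [← hd] at h1 h2 h3
  refine ⟨h1.trans h2.symm, h2.trans h3.symm, h3, ?_⟩
  congr 2
  ring
end
end

section
/- In ℝ², let B = (0,0), C = (1,0), C′ = (1/2, 1), and let g be the perpendicular bisector of C and C′. Then: (i) g meets the line {p₁ = 0} in exactly the point E = (0, 1/8); (ii) the reflection of B across the line g is W = (−1/10, 1/5); (iii) the line through C′ and W meets the line {p₁ = 0} in exactly the point L = (0, 1/3); (iv) the triangle with vertices L, W, E is a right triangle with the right angle at W and side lengths dist(W,E) = 1/8, dist(L,W) = 1/6, dist(L,E) = 5/24; i.e. its sides are proportional to the Pythagorean triple (3,4,5). -/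
noncomputable section
open Real EuclideanGeometry

theorem mem_pb (P : Pt) (a b c d : ℝ) : P ∈ perpBisector (pt a b) (pt c d) ↔
    (P 0 - a)^2 + (P 1 - b)^2 = (P 0 - c)^2 + (P 1 - d)^2 := by
  simp only [perpBisector, Set.mem_ofPred_eq, EuclideanSpace.dist_eq, Fin.sum_univ_two, Real.dist_eq,
    sq_abs, pt]
  rw [Real.sqrt_inj (by positivity) (by positivity)]
  simp

theorem eq_pt (P : Pt) (a b : ℝ) : P = pt a b ↔ P 0 = a ∧ P 1 = b := by
  constructor
  · rintro rfl
    simp [pt]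
  · rintro ⟨h0, h1⟩
    ext i
    fin_cases i
    · simpa [pt] using h0
    · simpa [pt] using h1

theorem dist_pt (a b c d r : ℝ) (hr : 0 ≤ r) (h : (a - c)^2 + (b - d)^2 = r^2) :
    dist (pt a b) (pt c d) = r := by
  simp only [EuclideanSpace.dist_eq, Fin.sum_univ_two, Real.dist_eq, sq_abs, pt]
  rw [Real.sqrt_eq_iff_mul_self_eq (by positivity) hr]
  simp
  linarith

/-- **Haga's third Egyptian triangle.**  In the unit square with `B=(0,0)`, `C=(1,0)`
and `C'=(1/2,1)`, let `g` be the crease folding `C` onto `C'`.  Then (i) `g` meets the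
line `{p | p 0 = 0}` in exactly the point `E=(0,1/8)`; (ii) the fold (reflection
across `g`) takes `B` to `W=(-1/10,1/5)`, i.e. `g` is the perpendicular bisector of
`B` and `W`; (iii) the line through `C'` and `W` meets `{p | p 0 = 0}` in exactly the
point `L=(0,1/3)`; (iv) the triangle `L, W, E` is right-angled at `W` with side lengths
`1/8`, `1/6`, `5/24`, i.e. proportional to the Pythagorean triple `(3,4,5)`. -/
theorem haga_egyptian_triangle_T3
    (B : Pt) (hB : B = pt 0 0) (C : Pt) (hC : C = pt 1 0) (C' : Pt) (hC' : C' = pt (1/2) 1)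
    (E : Pt) (hE : E = pt 0 (1/8)) (W : Pt) (hW : W = pt (-(1/10)) (1/5))
    (L : Pt) (hL : L = pt 0 (1/3)) :
    perpBisector C C' ∩ {p : Pt | p 0 = 0} = {E} ∧
    perpBisector B W = perpBisector C C' ∧
    (↑(affineSpan ℝ ({C', W} : Set Pt)) ∩ {p : Pt | p 0 = 0} = ({L} : Set Pt)) ∧
    ∠ L W E = π/2 ∧
    dist W E = 1/8 ∧ dist L W = 1/6 ∧ dist L E = 5/24 := by
  subst hB hC hC' hE hW hL
  refine ⟨?_, ?_, ?_, ?_, ?_, ?_, ?_⟩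
  · ext P
    rw [Set.mem_inter_iff, mem_pb, Set.mem_singleton_iff, eq_pt, Set.mem_ofPred_eq]
    constructor
    · rintro ⟨h, h0⟩
      rw [h0] at h
      exact ⟨h0, by linarith⟩
    · rintro ⟨h0, h1⟩
      rw [h0, h1]
      norm_num
  · ext P
    rw [mem_pb, mem_pb]
    constructor <;> intro h <;> linarith
  · ext P
    rw [Set.mem_inter_iff, Set.mem_singleton_iff, SetLike.mem_coe,
      mem_affineSpan_pair_iff_exists_lineMap_eq, Set.mem_ofPred_eq]
    constructor
    · rintro ⟨⟨r, rfl⟩, h0⟩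
      rw [eq_pt]
      refine ⟨h0, ?_⟩
      simp [AffineMap.lineMap_apply, pt] at h0 ⊢
      linarith
    · rintro rfl
      refine ⟨⟨5/6, ?_⟩, by simp [pt]⟩
      rw [eq_pt]
      simp [AffineMap.lineMap_apply, pt]
      norm_num
  · rw [EuclideanGeometry.angle, ← InnerProductGeometry.inner_eq_zero_iff_angle_eq_pi_div_two]
    simp [pt, PiLp.inner_apply, Fin.sum_univ_two]
    norm_num
  · apply dist_pt <;> norm_num
  · apply dist_pt <;> norm_num
  · apply dist_pt <;> norm_num
end
end

section
/- Let A = (a_x, a_y) with a_y ≠ 0 and B = (b_x, b_y) with b_x ≠ 0. Let X ∈ ℝ, put A′ = (a_x − X, 0), and suppose there exist t ∈ ℝ and B′ = (0, t) with B′ ≠ B and A′ ≠ A such that the perpendicular bisector of A and A′ equals the perpendicular bisector of B and B′ (a single fold maps A onto a point A′ of the x-axis and simultaneously B onto a point B′ of the y-axis). Then X satisfies the cubic equation X³ + (b_x − 2a_x)·X² + a_y·(2b_y − a_y)·X − a_y²·b_x = 0. -/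
noncomputable section
open Real EuclideanGeometry

theorem mem_perpBisector_pt (p q a b c d : ℝ) :
    pt p q ∈ perpBisector (pt a b) (pt c d) ↔
      (p - a)^2 + (q - b)^2 = (p - c)^2 + (q - d)^2 := by
  have h1 : (0:ℝ) ≤ (p - a)^2 + (q - b)^2 := by positivity
  have h2 : (0:ℝ) ≤ (p - c)^2 + (q - d)^2 := by positivity
  simp only [perpBisector, pt, Set.mem_setOf_eq, EuclideanSpace.dist_eq, Fin.sum_univ_two,
    Real.dist_eq, sq_abs]
  simpa using Real.sqrt_inj h1 h2

/-- **Huzita's cubic, special case `α = π/2`.**  Let `A = (a_x, a_y)` with `a_y ≠ 0`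
and `B = (b_x, b_y)` with `b_x ≠ 0`.  If a single fold maps `A` onto `A' = (a_x - X, 0)`
on the x-axis (with `A' ≠ A`) and simultaneously `B` onto some point `B' = (0, t) ≠ B`
of the y-axis, then `X³ + (b_x - 2a_x)X² + a_y(2b_y - a_y)X - a_y²·b_x = 0`. -/
theorem huzita_cubic_right_angle (a_x a_y b_x b_y X : ℝ)
    (ha : a_y ≠ 0) (hb : b_x ≠ 0)
    (hfold : ∃ t : ℝ, pt 0 t ≠ pt b_x b_y ∧ pt (a_x - X) 0 ≠ pt a_x a_y ∧
      perpBisector (pt a_x a_y) (pt (a_x - X) 0)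
        = perpBisector (pt b_x b_y) (pt 0 t)) :
    X^3 + (b_x - 2*a_x)*X^2 + a_y*(2*b_y - a_y)*X - a_y^2*b_x = 0 := by
  obtain ⟨t, -, -, h⟩ := hfold
  have e1 : pt (a_x - X/2) (a_y/2) ∈ perpBisector (pt b_x b_y) (pt 0 t) := by
    rw [← h, mem_perpBisector_pt]; ring
  have e2 : pt (a_x - X/2 - a_y) (a_y/2 + X) ∈ perpBisector (pt b_x b_y) (pt 0 t) := by
    rw [← h, mem_perpBisector_pt]; ring
  rw [mem_perpBisector_pt] at e1 e2
  have e3 : X * (b_y - t) = a_y * b_x := by linarith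
  have e4 : (2*a_x - X - b_x) * X + (a_y - b_y - t) * a_y = 0 := by
    have : b_x * ((2*a_x - X - b_x) * X + (a_y - b_y - t) * a_y) = 0 := by
      linear_combination (-X) * e1 + (-(a_y - b_y - t)) * e3
    exact (mul_eq_zero.mp this).resolve_left hb
  linear_combination (-X) * e4 + a_y * e3
end
end

section
/- Let A = (a_x, a_y) and B = (b_x, b_y) with a_y ≠ 0, b_y ≠ 0, and a_y ≠ b_y. Let X ≠ 0 and Y ≠ 0, put A′ = (a_x − X, 0) and B′ = (b_x − Y, 0), and suppose the perpendicular bisector of A and A′ equals the perpendicular bisector of B and B′ (a single fold maps both A and B onto points of the x-axis). Then Y = (b_y/a_y)·X, and X satisfies the quadratic equation X² − 2·a_y·((a_x − b_x)/(a_y − b_y))·X − a_y² = 0. -/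
noncomputable section
open Real EuclideanGeometry

theorem mem_perp_iff (x y u v p q : ℝ) :
    pt p q ∈ perpBisector (pt x y) (pt u v) ↔
      (p - x)^2 + (q - y)^2 = (p - u)^2 + (q - v)^2 := by
  simp only [perpBisector, pt, Set.mem_setOf_eq, EuclideanSpace.dist_eq, Fin.sum_univ_two,
    Real.dist_eq, sq_abs]
  rw [Real.sqrt_inj (by positivity) (by positivity)]
  simp

/-- **Huzita's construction, degenerate case `α = 0`.**  Let `A = (a_x, a_y)`,
`B = (b_x, b_y)` with `a_y ≠ 0`, `b_y ≠ 0`, `a_y ≠ b_y`.  If a single fold maps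
`A` onto `A' = (a_x - X, 0)` and `B` onto `B' = (b_x - Y, 0)`, both on the x-axis
(with `X ≠ 0`, `Y ≠ 0`), then `Y = (b_y/a_y)·X` and `X` satisfies the quadratic
`X² - 2a_y((a_x - b_x)/(a_y - b_y))X - a_y² = 0`. -/
theorem huzita_degenerate_alpha_zero (a_x a_y b_x b_y X Y : ℝ)
    (ha : a_y ≠ 0) (hb : b_y ≠ 0) (hab : a_y ≠ b_y)
    (hX : X ≠ 0) (hY : Y ≠ 0)
    (hfold : perpBisector (pt a_x a_y) (pt (a_x - X) 0)
      = perpBisector (pt b_x b_y) (pt (b_x - Y) 0)) :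
    Y = (b_y/a_y) * X ∧
    X^2 - 2*a_y*((a_x - b_x)/(a_y - b_y))*X - a_y^2 = 0 := by
  have key : ∀ p q : ℝ, 2*p*X + 2*q*a_y = a_y^2 - X^2 + 2*a_x*X →
      2*p*Y + 2*q*b_y = b_y^2 - Y^2 + 2*b_x*Y := by
    intro p q h
    have h1 : pt p q ∈ perpBisector (pt a_x a_y) (pt (a_x - X) 0) := by
      rw [mem_perp_iff]; linarith
    rw [hfold, mem_perp_iff] at h1
    linarith
  have h0 := key 0 ((a_y^2 - X^2 + 2*a_x*X)/(2*a_y)) (by field_simp; ring)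
  have h1 := key 1 ((a_y^2 - X^2 + 2*a_x*X - 2*X)/(2*a_y)) (by field_simp; ring)
  have hYX : Y = (b_y/a_y) * X := by
    field_simp at h0 h1 ⊢
    have : 2 * (Y * a_y - b_y * X) = 0 := by linarith
    linarith
  refine ⟨hYX, ?_⟩
  have hd : a_y - b_y ≠ 0 := sub_ne_zero.mpr hab
  rw [hYX] at h0
  field_simp at h0 ⊢
  linarith
end
end

section
/- Let d ∈ ℝ, let A = (a_x, a_y) with a_y ≠ 0, and let B = (b_x, b_y). Let X ≠ 0, put A′ = (a_x − X, 0), and suppose there exists B′ = (b′_x, d) with B′ ≠ B such that the perpendicular bisector of A and A′ equals the perpendicular bisector of B and B′ (a single fold maps A onto a point A′ of the x-axis and simultaneously B onto a point B′ of the parallel line {p₂ = d}). Then b′_x = ((d − b_y)·X + b_x·a_y)/a_y, and X satisfies the quadratic equation (a_y − b_y + d)·X² − 2·a_y·(a_x − b_x)·X − a_y²·(a_y − b_y − d) = 0. -/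
noncomputable section
open Real EuclideanGeometry

/-- **Huzita's construction, parallel-lines case.**  Let `A = (a_x, a_y)` with
`a_y ≠ 0` and `B = (b_x, b_y)`.  If a single fold maps `A` onto `A' = (a_x - X, 0)`
on the x-axis (`X ≠ 0`) and simultaneously `B` onto some point `B' = (b'_x, d) ≠ B`
of the parallel line `{p | p 1 = d}`, then `b'_x = ((d - b_y)X + b_x·a_y)/a_y` and
`X` satisfies `(a_y - b_y + d)X² - 2a_y(a_x - b_x)X - a_y²(a_y - b_y - d) = 0`. -/
theorem huzita_parallel_lines (d a_x a_y b_x b_y X b'_x : ℝ)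
    (ha : a_y ≠ 0) (hX : X ≠ 0)
    (hne : pt b'_x d ≠ pt b_x b_y)
    (hfold : perpBisector (pt a_x a_y) (pt (a_x - X) 0)
      = perpBisector (pt b_x b_y) (pt b'_x d)) :
    b'_x = ((d - b_y)*X + b_x*a_y)/a_y ∧
    (a_y - b_y + d)*X^2 - 2*a_y*(a_x - b_x)*X - a_y^2*(a_y - b_y - d) = 0 := by
  have key : ∀ x y p q r s : ℝ, pt x y ∈ perpBisector (pt p q) (pt r s) ↔
      (x - p)^2 + (y - q)^2 = (x - r)^2 + (y - s)^2 := by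
    intro x y p q r s
    simp only [perpBisector, Set.mem_setOf_eq, pt, EuclideanSpace.dist_eq, Fin.sum_univ_two,
      Real.dist_eq, sq_abs]
    rw [Real.sqrt_inj (by positivity) (by positivity)]
    simp
  have h1 : pt (a_x - X/2) (a_y/2) ∈ perpBisector (pt a_x a_y) (pt (a_x - X) 0) := by
    rw [key]; ring
  have h2 : pt (a_x - X/2 + a_y) (a_y/2 - X) ∈
      perpBisector (pt a_x a_y) (pt (a_x - X) 0) := by
    rw [key]; ring
  rw [hfold, key] at h1 h2
  have h3 : (b'_x - b_x) * a_y = (d - b_y) * X := by linarith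
  have h4 : b'_x = ((d - b_y)*X + b_x*a_y)/a_y := by
    rw [eq_div_iff ha]; linarith
  refine ⟨h4, ?_⟩
  have h5 : d - b_y ≠ 0 := by
    intro h
    rw [h, zero_mul] at h3
    have h6 : b'_x - b_x = 0 := (mul_eq_zero.mp h3).resolve_right ha
    exact hne (by rw [sub_eq_zero.mp h, sub_eq_zero.mp h6])
  obtain ⟨t, ht⟩ : ∃ t, t * a_y = d - b_y := ⟨(d - b_y)/a_y, by field_simp⟩
  have h6 : b'_x = b_x + t * X := by
    apply mul_right_cancel₀ ha
    linear_combination h3 - X * ht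
  have hd : d = b_y + t * a_y := by linarith
  have ht0 : t ≠ 0 := by
    rintro rfl
    exact h5 (by linarith)
  subst h6 hd
  apply mul_left_cancel₀ ht0
  linear_combination (-a_y) * h1
end
end

section
/- The real roots of the heptagon polynomial C(7,x) = x³ − x² − 2x + 1 are exactly the three numbers 2·cos(π/7), 2·cos(3π/7), and 2·cos(5π/7) (the last equals −2·cos(2π/7)); these three numbers are pairwise distinct, and every real x with x³ − x² − 2x + 1 = 0 equals one of them. -/
noncomputable section
open Real

theorem hept_root (t : ℝ) (h : cos (4*t) = -cos (3*t)) (hc : cos t ≠ -1) :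
    (2*cos t)^3 - (2*cos t)^2 - 2*(2*cos t) + 1 = 0 := by
  have h4 : cos (4*t) = 2*(2*cos t^2-1)^2-1 := by
    rw [show 4*t = 2*(2*t) by ring, cos_two_mul, cos_two_mul]
  rw [h4, cos_three_mul] at h
  have h1 : cos t + 1 ≠ 0 := fun h => hc (by linarith)
  apply mul_left_cancel₀ h1
  linear_combination h

/-- The real roots of the heptagon polynomial `C(7,x) = x³ - x² - 2x + 1` are exactly
the three pairwise distinct numbers `2cos(π/7)`, `2cos(3π/7)` and `2cos(5π/7)`
(the last equals `-2cos(2π/7)`). -/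
theorem heptagon_polynomial_roots :
    (∀ x : ℝ, x^3 - x^2 - 2*x + 1 = 0 ↔
      (x = 2*Real.cos (π/7) ∨ x = 2*Real.cos (3*π/7) ∨ x = 2*Real.cos (5*π/7))) ∧
    2*Real.cos (π/7) ≠ 2*Real.cos (3*π/7) ∧
    2*Real.cos (π/7) ≠ 2*Real.cos (5*π/7) ∧
    2*Real.cos (3*π/7) ≠ 2*Real.cos (5*π/7) ∧
    2*Real.cos (5*π/7) = -(2*Real.cos (2*π/7)) := by
  have hp := Real.pi_pos
  have l1 : cos (3*π/7) < cos (π/7) :=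
    Real.cos_lt_cos_of_nonneg_of_le_pi (by positivity) (by linarith) (by linarith)
  have l2 : cos (5*π/7) < cos (3*π/7) :=
    Real.cos_lt_cos_of_nonneg_of_le_pi (by positivity) (by linarith) (by linarith)
  have l3 : -1 < cos (5*π/7) := by
    rw [← Real.cos_pi]
    exact Real.cos_lt_cos_of_nonneg_of_le_pi (by positivity) (by linarith) (by linarith)
  have ra := hept_root (π/7) (by rw [← Real.cos_pi_sub]; congr 1; ring)
    (by intro h; linarith)
  have rb := hept_root (3*π/7) (by
    rw [← Real.cos_pi_sub, ← Real.cos_add_two_pi (π - _)]; congr 1; ring)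
    (by intro h; linarith)
  have rc := hept_root (5*π/7) (by
    rw [← Real.cos_pi_sub, ← Real.cos_add_two_pi (π - _), ← Real.cos_add_two_pi (π - _ + _)]
    congr 1; ring)
    (by intro h; linarith)
  refine ⟨fun x => ⟨fun hx => ?_, ?_⟩, by intro h; linarith, by intro h; linarith,
    by intro h; linarith, ?_⟩
  · have hab : 2*cos (π/7) - 2*cos (3*π/7) ≠ 0 := by intro h; linarith
    have hac : 2*cos (π/7) - 2*cos (5*π/7) ≠ 0 := by intro h; linarith
    have hbc : 2*cos (3*π/7) - 2*cos (5*π/7) ≠ 0 := by intro h; linarith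
    generalize 2*cos (π/7) = a at *
    generalize 2*cos (3*π/7) = b at *
    generalize 2*cos (5*π/7) = c at *
    have e1 : a^2+a*b+b^2-(a+b)-2 = 0 := by
      apply mul_left_cancel₀ hab
      linear_combination ra - rb
    have e2 : a^2+a*c+c^2-(a+c)-2 = 0 := by
      apply mul_left_cancel₀ hac
      linear_combination ra - rc
    have e3 : a + b + c - 1 = 0 := by
      apply mul_left_cancel₀ hbc
      linear_combination e1 - e2
    have e4 : (x-a)*((x-b)*(x-c)) = 0 := by
      linear_combination hx - ra - (x-a)*e1 - (x-a)*(x-b)*e3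
    rcases mul_eq_zero.mp e4 with h | h
    · left; linarith
    · rcases mul_eq_zero.mp h with h | h
      · right; left; linarith
      · right; right; linarith
  · rintro (h | h | h) <;> rw [h] <;> assumption
  · rw [show 5*π/7 = π - 2*π/7 by ring, Real.cos_pi_sub]; ring
end
end

section
/- For each k ∈ {1, 3, 5}, the number X = 1/cos(kπ/7) satisfies the cubic equation X³ − 4X² − 4X + 8 = 0. -/
noncomputable section
open Real

lemma hept_aux (t : ℝ) (h0 : 0 < t) (h1 : t < π) (h : Real.cos (4*t) = -Real.cos (3*t)) :
    (1 / Real.cos t)^3 - 4*(1 / Real.cos t)^2 - 4*(1 / Real.cos t) + 8 = 0 := by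
  have hs : 0 < Real.sin t := Real.sin_pos_of_pos_of_lt_pi h0 h1
  have hsq := Real.sin_sq_add_cos_sq t
  have h4 : Real.cos (4*t) = 2*(2*Real.cos t^2-1)^2-1 := by
    rw [show 4*t = 2*(2*t) by ring, Real.cos_two_mul, Real.cos_two_mul]
  rw [h4, Real.cos_three_mul] at h
  generalize Real.cos t = c at *
  have hc1 : c + 1 ≠ 0 := by
    intro hc
    have : c = -1 := by linarith
    subst this
    nlinarith
  have hcub : 8*c^3 - 4*c^2 - 4*c + 1 = 0 := by
    apply mul_left_cancel₀ hc1
    linarith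
  have hc0 : c ≠ 0 := by
    rintro rfl
    norm_num at hcub
  field_simp
  linarith

/-- For each `k ∈ {1, 3, 5}`, the number `X = 1/cos(kπ/7)` satisfies the cubic
`X³ - 4X² - 4X + 8 = 0` governing the origami construction of the heptagon roots. -/
theorem heptagon_origami_cubic :
    ∀ k ∈ ({1, 3, 5} : Set ℕ),
      (1 / Real.cos ((k : ℝ)*π/7))^3 - 4*(1 / Real.cos ((k : ℝ)*π/7))^2
        - 4*(1 / Real.cos ((k : ℝ)*π/7)) + 8 = 0 := by
  intro k hk
  have hpi := Real.pi_pos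
  simp only [Set.mem_insert_iff, Set.mem_singleton_iff] at hk
  rcases hk with rfl | rfl | rfl
  · apply hept_aux
    · positivity
    · push_cast; linarith
    · rw [← Real.cos_pi_sub]
      congr 1
      push_cast; ring
  · apply hept_aux
    · positivity
    · push_cast; linarith
    · rw [← Real.cos_pi_sub, ← Real.cos_add_two_pi (π - _)]
      congr 1
      push_cast; ring
  · apply hept_aux
    · positivity
    · push_cast; linarith
    · rw [← Real.cos_pi_sub, ← Real.cos_add_two_pi (π - _), ← Real.cos_add_two_pi (π - _ + _)]
      congr 1
      push_cast; ring
end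
end

section
/- Let s ∈ (0,1). In ℝ², let g be the perpendicular bisector of C = (1,0) and C′ = (0,s) (the crease folding the corner C of the unit square onto the point C′ of the opposite side at height s), and let J′ be the reflection of J = (1, 1/3) across the line g. If the second coordinate of J′ equals 2/3 (i.e. the same fold carries J onto the horizontal line {p₂ = 2/3}), then s³ − s² + s − 1/3 = 0; equivalently, ((1 − s)/s)³ = 2, so the fold solves the doubling of the cube. -/
noncomputable section
open Real EuclideanGeometry

/-- **Doubling the cube by origami.**  Let `s ∈ (0,1)`, let `g` be the crease folding
the corner `C = (1,0)` of the unit square onto `C' = (0,s)`, and let `J'` be the image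
of `J = (1, 1/3)` under the fold, i.e. the reflection of `J` across `g` (characterised,
for `J' ≠ J`, by `g` being the perpendicular bisector of `J` and `J'`).  If the second
coordinate of `J'` is `2/3`, then `s³ - s² + s - 1/3 = 0`; equivalently
`((1 - s)/s)³ = 2`, so the fold doubles the cube. -/
theorem doubling_the_cube_fold (s : ℝ) (hs : s ∈ Set.Ioo (0:ℝ) 1)
    (C : Pt) (hC : C = pt 1 0) (C' : Pt) (hC' : C' = pt 0 s)
    (J : Pt) (hJ : J = pt 1 (1/3)) (J' : Pt) (hJne : J' ≠ J)
    (hrefl : perpBisector J J' = perpBisector C C')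
    (hJ'y : J' 1 = 2/3) :
    s^3 - s^2 + s - 1/3 = 0 ∧ ((1 - s)/s)^3 = 2 := by
  obtain ⟨h0, h1⟩ := hs
  subst hC hC' hJ
  have key : ∀ y : ℝ, pt (s * y + (1 - s^2)/2) y ∈ perpBisector (pt 1 (1/3)) J' := by
    intro y
    rw [hrefl]
    simp only [perpBisector, pt, Set.mem_setOf_eq, EuclideanSpace.dist_eq, Fin.sum_univ_two,
      Real.dist_eq, sq_abs]
    congr 1
    simp
    ring
  have key2 : ∀ y : ℝ, (s * y + (1 - s^2)/2 - 1)^2 + (y - 1/3)^2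
      = (s * y + (1 - s^2)/2 - J' 0)^2 + (y - 2/3)^2 := by
    intro y
    have h := key y
    simp only [perpBisector, pt, Set.mem_setOf_eq, EuclideanSpace.dist_eq, Fin.sum_univ_two,
      Real.dist_eq, sq_abs] at h
    rw [Real.sqrt_inj (by positivity) (by positivity)] at h
    rw [hJ'y] at h
    simpa using h
  have e0 := key2 0
  have e1 := key2 1
  generalize J' 0 = a at e0 e1
  have hd : (1 - a) * s = 1/3 := by linarith
  have e2 : (1 - a) + s/3 - (1-a)^2 - 1/3 = 0 := by
    linear_combination e0 - s * hd
  have main : s^3 - s^2 + s - 1/3 = 0 := by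
    linear_combination 3 * s^2 * e2 + (-3*s + 3 * ((1-a)*s + 1/3)) * hd
  refine ⟨main, ?_⟩
  rw [div_pow, div_eq_iff (by positivity)]
  linear_combination -3 * main
end
end

section
/- Let α ∈ (0, π/2) and h > 0. For k ∈ {0, 1, 2} put θ_k = (α + kπ)/3 and X_k = h·cos(θ_k)/sin(θ_k). Then each X_k satisfies the cubic equation X³ − (3h/tan α)·X² − 3h²·X + h³/tan α = 0, and X_0, X_1, X_2 are pairwise distinct; in particular this cubic, which governs the origami trisection fold, has three distinct real roots, corresponding to the trisection of the angles α, π + α, and π − α (the root for π − α being X_2 = −h·cot((π − α)/3)). -/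
noncomputable section
open Real

theorem aux_root (α h θ : ℝ) (hs : Real.sin θ ≠ 0) (ha : Real.sin α ≠ 0)
    (hc : Real.cos α ≠ 0) (h3 : Real.sin (α - 3*θ) = 0) :
    (h * Real.cos θ / Real.sin θ)^3 - (3*h/Real.tan α)*(h * Real.cos θ / Real.sin θ)^2
      - 3*h^2*(h * Real.cos θ / Real.sin θ) + h^3/Real.tan α = 0 := by
  rw [Real.sin_sub, Real.cos_three_mul, Real.sin_three_mul] at h3
  have h1 := Real.sin_sq_add_cos_sq θ
  have key : Real.sin α * (Real.cos θ^3 - 3 * Real.cos θ * Real.sin θ^2)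
      - Real.cos α * (3 * Real.cos θ^2 * Real.sin θ - Real.sin θ^3) = 0 := by
    linear_combination h3 + (-3 * Real.sin α * Real.cos θ - 3 * Real.cos α * Real.sin θ) * h1
  have : (h * Real.cos θ / Real.sin θ)^3 - (3*h/Real.tan α)*(h * Real.cos θ / Real.sin θ)^2
      - 3*h^2*(h * Real.cos θ / Real.sin θ) + h^3/Real.tan α
      = h^3 / (Real.sin θ^3 * Real.sin α) *
        (Real.sin α * (Real.cos θ^3 - 3 * Real.cos θ * Real.sin θ^2)
      - Real.cos α * (3 * Real.cos θ^2 * Real.sin θ - Real.sin θ^3)) := by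
    rw [Real.tan_eq_sin_div_cos]
    field_simp
    ring
  rw [this, key, mul_zero]

theorem aux_ne (h a b : ℝ) (hh : 0 < h) (ha : 0 < Real.sin a) (hb : 0 < Real.sin b)
    (h1 : a < b) (h2 : b - a < π) :
    h * Real.cos a / Real.sin a ≠ h * Real.cos b / Real.sin b := by
  intro he
  rw [div_eq_div_iff ha.ne' hb.ne'] at he
  have hp := Real.sin_pos_of_pos_of_lt_pi (sub_pos.2 h1) h2
  rw [Real.sin_sub] at hp
  have := mul_pos hh hp
  nlinarith

/-- **The trisection cubic has three distinct real roots.**  Let `α ∈ (0, π/2)` and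
`h > 0`.  For `k ∈ {0,1,2}` put `θ_k = (α + kπ)/3` and `X_k = h·cos θ_k/sin θ_k`.
Then each `X_k` is a root of `X³ - (3h/tan α)X² - 3h²X + h³/tan α = 0`, the roots
`X_0, X_1, X_2` are pairwise distinct, and `X_2 = -h·cos((π-α)/3)/sin((π-α)/3)`,
the root corresponding to the trisection of `π - α` (while `X_0, X_1` correspond to
the trisection of `α` and `π + α`). -/
theorem origami_trisection_cubic (α h : ℝ) (hα : α ∈ Set.Ioo 0 (π/2)) (hh : 0 < h)
    (X : ℕ → ℝ) (hX : ∀ k, X k = h * Real.cos ((α + k*π)/3) / Real.sin ((α + k*π)/3)) :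
    (∀ k ∈ ({0, 1, 2} : Set ℕ),
      (X k)^3 - (3*h/Real.tan α)*(X k)^2 - 3*h^2*(X k) + h^3/Real.tan α = 0) ∧
    X 0 ≠ X 1 ∧ X 0 ≠ X 2 ∧ X 1 ≠ X 2 ∧
    X 2 = -(h * Real.cos ((π - α)/3) / Real.sin ((π - α)/3)) := by
  obtain ⟨h0, h1⟩ := hα
  have hpi := Real.pi_pos
  have sα : 0 < Real.sin α := Real.sin_pos_of_pos_of_lt_pi h0 (by linarith)
  have cα : 0 < Real.cos α := Real.cos_pos_of_mem_Ioo ⟨by linarith, h1⟩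
  have s0 : 0 < Real.sin ((α + (0:ℕ)*π)/3) :=
    Real.sin_pos_of_pos_of_lt_pi (by push_cast; linarith) (by push_cast; linarith)
  have s1 : 0 < Real.sin ((α + (1:ℕ)*π)/3) :=
    Real.sin_pos_of_pos_of_lt_pi (by push_cast; linarith) (by push_cast; linarith)
  have s2 : 0 < Real.sin ((α + (2:ℕ)*π)/3) :=
    Real.sin_pos_of_pos_of_lt_pi (by push_cast; linarith) (by push_cast; linarith)
  refine ⟨?_, ?_, ?_, ?_, ?_⟩
  · intro k hk
    rw [hX k]
    refine aux_root α h _ ?_ sα.ne' cα.ne' ?_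
    · rcases hk with rfl | rfl | rfl
      exacts [s0.ne', s1.ne', s2.ne']
    · have : α - 3 * ((α + k*π)/3) = -(k*π) := by ring
      rw [this, Real.sin_neg, Real.sin_nat_mul_pi, neg_zero]
  · rw [hX 0, hX 1]
    exact aux_ne h _ _ hh s0 s1 (by push_cast; linarith) (by push_cast; linarith)
  · rw [hX 0, hX 2]
    exact aux_ne h _ _ hh s0 s2 (by push_cast; linarith) (by push_cast; linarith)
  · rw [hX 1, hX 2]
    exact aux_ne h _ _ hh s1 s2 (by push_cast; linarith) (by push_cast; linarith)
  · rw [hX 2]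
    have : (α + (2:ℕ)*π)/3 = π - (π - α)/3 := by push_cast; ring
    rw [this, Real.cos_pi_sub, Real.sin_pi_sub]
    ring
end
end
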